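/- Let G and G' be graphs on vertex sets {1,…,t} and {1,…,t'} with edge sets E and E', and let U ∈ R^{t×n} and U' ∈ R^{t'×n} have nonnegative entries with each row summing to 1. Then SDD^G_+(U) = SDD^{G'}_+(U') if and only if seg(G,U) = seg(G',U'). -/

import Mathlib

open Matrix Set

noncomputable section

/-- The embedding `ι_{ij} : S² → Sⁿ` placing a 2×2 symmetric matrix into
rows/columns `i, j` with zeros elsewhere. -/
def iota {n : ℕ} (i j : Fin n) (S : Matrix (Fin 2) (Fin 2) ℝ) :
    Matrix (Fin n) (Fin n) ℝ :=
  Matrix.of fun r s =>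
    (if r = i ∧ s = i then S 0 0 else 0) +
    (if r = i ∧ s = j then S 0 1 else 0) +
    (if r = j ∧ s = i then S 1 0 else 0) +
    (if r = j ∧ s = j then S 1 1 else 0)

/-- The cone `SDDⁿ = Σ_{i<j} ι_{ij}(S²₊)` of scaled diagonally dominant matrices. -/
def SDD (n : ℕ) : Set (Matrix (Fin n) (Fin n) ℝ) :=
  {X | ∃ S : Fin n → Fin n → Matrix (Fin 2) (Fin 2) ℝ,
    (∀ i j : Fin n, (S i j).PosSemidef) ∧
    X = ∑ i : Fin n, ∑ j : Fin n, if i < j then iota i j (S i j) else 0}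

/-- `Nⁿ`: symmetric entrywise nonnegative matrices. -/
def NonnegMat (n : ℕ) : Set (Matrix (Fin n) (Fin n) ℝ) :=
  {X | X.IsSymm ∧ ∀ i j, 0 ≤ X i j}

/-- Dual cone within the space of symmetric matrices, w.r.t. the trace inner product. -/
def dualCone {n : ℕ} (C : Set (Matrix (Fin n) (Fin n) ℝ)) :
    Set (Matrix (Fin n) (Fin n) ℝ) :=
  {Y | Y.IsSymm ∧ ∀ X ∈ C, 0 ≤ (X * Y).trace}

open scoped Classical in
/-- `SDD^G = Σ_{{i,j}∈E} ι_{ij}(S²₊)` (equal to `{0}` if `E = ∅`). -/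
def SDDG {t : ℕ} (G : SimpleGraph (Fin t)) : Set (Matrix (Fin t) (Fin t) ℝ) :=
  {X | ∃ S : Fin t → Fin t → Matrix (Fin 2) (Fin 2) ℝ,
    (∀ i j : Fin t, (S i j).PosSemidef) ∧
    X = ∑ i : Fin t, ∑ j : Fin t, if i < j ∧ G.Adj i j then iota i j (S i j) else 0}

/-- `SDD^G₊ = SDD^G ∩ Nᵗ`. -/
def SDDGplus {t : ℕ} (G : SimpleGraph (Fin t)) : Set (Matrix (Fin t) (Fin t) ℝ) :=
  SDDG G ∩ NonnegMat t

/-- `SDD^G₊(U) = Uᵀ (SDD^G₊) U`. -/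
def SDDGplusU {t n : ℕ} (G : SimpleGraph (Fin t)) (U : Matrix (Fin t) (Fin n) ℝ) :
    Set (Matrix (Fin n) (Fin n) ℝ) :=
  {X | ∃ Y ∈ SDDGplus G, X = Uᵀ * Y * U}

/-- `seg(G,U) = ∪_{{i,j}∈E} [uᵢ, uⱼ]`. -/
def seg {t n : ℕ} (G : SimpleGraph (Fin t)) (U : Matrix (Fin t) (Fin n) ℝ) :
    Set (Fin n → ℝ) :=
  {v | ∃ i j : Fin t, G.Adj i j ∧ v ∈ segment ℝ (U i) (U j)}

/-- The convex cone generated by the rank-one matrices `v vᵀ` with `v ∈ V`. -/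
def rankOneCone {n : ℕ} (V : Set (Fin n → ℝ)) : AddSubmonoid (Matrix (Fin n) (Fin n) ℝ) :=
  AddSubmonoid.closure {X | ∃ r : ℝ, 0 ≤ r ∧ ∃ v ∈ V, X = r • vecMulVec v v}

lemma dotProduct_rankOne_mulVec {n : ℕ} (r : ℝ) (v x : Fin n → ℝ) :
    x ⬝ᵥ ((r • vecMulVec v v) *ᵥ x) = r * (v ⬝ᵥ x) ^ 2 := by
  rw [smul_mulVec, vecMulVec_mulVec, dotProduct_smul, op_smul_eq_smul, dotProduct_smul,
    dotProduct_comm x v, smul_eq_mul, smul_eq_mul]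
  ring

lemma eq_of_forall_dotProduct_eq_zero {n : ℕ} {v w : Fin n → ℝ}
    (hv : ∑ i, v i = 1) (hw : ∑ i, w i = 1)
    (h : ∀ x : Fin n → ℝ, v ⬝ᵥ x = 0 → w ⬝ᵥ x = 0) : w = v := by
  have hvv : v ⬝ᵥ v ≠ 0 := by
    intro h0
    rw [dotProduct_self_eq_zero] at h0
    simp [h0] at hv
  set c : ℝ := (v ⬝ᵥ w) / (v ⬝ᵥ v) with hc
  have hx : v ⬝ᵥ (w - c • v) = 0 := by
    rw [dotProduct_sub, dotProduct_smul, smul_eq_mul, hc, div_mul_cancel₀ _ hvv, sub_self]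
  have hself : (w - c • v) ⬝ᵥ (w - c • v) = 0 := by
    conv_lhs => rw [sub_dotProduct, smul_dotProduct, hx, h _ hx]
    simp
  have hwc : w = c • v := sub_eq_zero.mp (dotProduct_self_eq_zero.mp hself)
  have hc1 : c = 1 := by
    rw [hwc] at hw
    simpa [← Finset.mul_sum, hv] using hw
  rw [hwc, hc1, one_smul]

/-- A nonzero element of the cone over `V` whose quadratic form vanishes on `v^⊥`
forces `v ∈ V`. -/
lemma mem_of_rankOneCone {n : ℕ} {V : Set (Fin n → ℝ)} (hV : ∀ w ∈ V, ∑ i, w i = 1)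
    {v : Fin n → ℝ} (hv : ∑ i, v i = 1) {X : Matrix (Fin n) (Fin n) ℝ}
    (hX : X ∈ rankOneCone V) :
    (∀ x, 0 ≤ x ⬝ᵥ (X *ᵥ x)) ∧
      (X ≠ 0 → (∀ x, v ⬝ᵥ x = 0 → x ⬝ᵥ (X *ᵥ x) = 0) → v ∈ V) := by
  induction hX using AddSubmonoid.closure_induction with
  | mem X hX =>
    obtain ⟨r, hr, w, hw, rfl⟩ := hX
    refine ⟨fun x => ?_, fun h0 h => ?_⟩
    · rw [dotProduct_rankOne_mulVec]
      positivity
    · have hr0 : r ≠ 0 := by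
        rintro rfl
        simp at h0
      have hwv : w = v := by
        refine eq_of_forall_dotProduct_eq_zero hv (hV w hw) fun x hx => ?_
        have hq := h x hx
        rw [dotProduct_rankOne_mulVec] at hq
        simpa [hr0] using hq
      exact hwv ▸ hw
  | zero => simp
  | add X Y _ _ ihX ihY =>
    refine ⟨fun x => ?_, fun h0 h => ?_⟩
    · rw [add_mulVec, dotProduct_add]
      exact add_nonneg (ihX.1 x) (ihY.1 x)
    · have hzero : ∀ x, v ⬝ᵥ x = 0 → x ⬝ᵥ (X *ᵥ x) = 0 ∧ x ⬝ᵥ (Y *ᵥ x) = 0 := by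
        intro x hx
        have hq := h x hx
        rw [add_mulVec, dotProduct_add] at hq
        exact (add_eq_zero_iff_of_nonneg (ihX.1 x) (ihY.1 x)).mp hq
      by_cases hX0 : X = 0
      · have hY0 : Y ≠ 0 := by
          rintro rfl
          simp [hX0] at h0
        exact ihY.2 hY0 fun x hx => (hzero x hx).2
      · exact ihX.2 hX0 fun x hx => (hzero x hx).1

lemma subset_of_rankOneCone_le {n : ℕ} {V W : Set (Fin n → ℝ)}
    (hV : ∀ w ∈ V, ∑ i, w i = 1) (hW : ∀ w ∈ W, ∑ i, w i = 1)
    (h : rankOneCone V ≤ rankOneCone W) : V ⊆ W := by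
  intro v hvV
  have hv := hV v hvV
  have hmem : (1 : ℝ) • vecMulVec v v ∈ rankOneCone W :=
    h (AddSubmonoid.subset_closure ⟨1, zero_le_one, v, hvV, rfl⟩)
  refine (mem_of_rankOneCone hW hv hmem).2 ?_ fun x hx => ?_
  · rw [one_smul, Ne, vecMulVec_eq_zero, or_self]
    rintro rfl
    simp at hv
  · rw [dotProduct_rankOne_mulVec, hx]
    simp

lemma sum_eq_one_of_mem_seg {t n : ℕ} {G : SimpleGraph (Fin t)} {U : Matrix (Fin t) (Fin n) ℝ}
    (hU : ∀ i, ∑ j, U i j = 1) : ∀ w ∈ seg G U, ∑ i, w i = 1 := by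
  rintro w ⟨i, j, -, a, b, -, -, hab, rfl⟩
  simp [Finset.sum_add_distrib, ← Finset.mul_sum, hU, hab]

lemma iota_eq_single {t : ℕ} (i j : Fin t) (S : Matrix (Fin 2) (Fin 2) ℝ) :
    iota i j S = single i i (S 0 0) + single i j (S 0 1) + single j i (S 1 0) +
      single j j (S 1 1) := by
  ext r s
  simp [iota, single_apply, eq_comm]

lemma iota_add {t : ℕ} (i j : Fin t) (S T : Matrix (Fin 2) (Fin 2) ℝ) :
    iota i j (S + T) = iota i j S + iota i j T := by
  simp only [iota_eq_single, Matrix.add_apply, single_add]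
  abel

lemma iota_zero {t : ℕ} (i j : Fin t) : iota i j 0 = 0 := by
  simp [iota_eq_single]

lemma transpose_mul_single_mul {t n : ℕ} (U : Matrix (Fin t) (Fin n) ℝ) (i j : Fin t) (c : ℝ) :
    Uᵀ * single i j c * U = c • vecMulVec (U i) (U j) := by
  ext r s
  simp [mul_apply, single_apply, vecMulVec_apply, ite_and, Finset.sum_ite_eq]
  ring

lemma transpose_mul_iota_mul {t n : ℕ} (U : Matrix (Fin t) (Fin n) ℝ) (i j : Fin t)
    (S : Matrix (Fin 2) (Fin 2) ℝ) :
    Uᵀ * iota i j S * U = S 0 0 • vecMulVec (U i) (U i) + S 0 1 • vecMulVec (U i) (U j) +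
      S 1 0 • vecMulVec (U j) (U i) + S 1 1 • vecMulVec (U j) (U j) := by
  simp only [iota_eq_single, Matrix.mul_add, Matrix.add_mul, transpose_mul_single_mul]

lemma vecMulVec_mem_rankOneCone_seg {t n : ℕ} {G : SimpleGraph (Fin t)}
    (U : Matrix (Fin t) (Fin n) ℝ) {i j : Fin t} (hij : G.Adj i j) {a b : ℝ}
    (ha : 0 ≤ a) (hb : 0 ≤ b) :
    vecMulVec (a • U i + b • U j) (a • U i + b • U j) ∈ rankOneCone (seg G U) := by
  rcases (add_nonneg ha hb).eq_or_lt with h | h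
  · obtain ⟨rfl, rfl⟩ := (add_eq_zero_iff_of_nonneg ha hb).mp h.symm
    simp
  · refine AddSubmonoid.subset_closure ⟨(a + b) ^ 2, sq_nonneg _,
      (a / (a + b)) • U i + (b / (a + b)) • U j,
      ⟨i, j, hij, a / (a + b), b / (a + b), by positivity, by positivity, by field_simp, rfl⟩, ?_⟩
    ext r s
    simp only [vecMulVec_apply, Matrix.smul_apply, Pi.add_apply, Pi.smul_apply, smul_eq_mul]
    field_simp

lemma transpose_mul_iota_mul_mem_rankOneCone {t n : ℕ} {G : SimpleGraph (Fin t)}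
    (U : Matrix (Fin t) (Fin n) ℝ) {i j : Fin t} (hij : G.Adj i j)
    {S : Matrix (Fin 2) (Fin 2) ℝ} (hS : S.PosSemidef) (h01 : 0 ≤ S 0 1) :
    Uᵀ * iota i j S * U ∈ rankOneCone (seg G U) := by
  have h00 : 0 ≤ S 0 0 := hS.diag_nonneg
  have h11 : 0 ≤ S 1 1 := hS.diag_nonneg
  have h10 : S 1 0 = S 0 1 := by simpa using hS.isHermitian.apply 0 1
  have hdet : 0 ≤ S 0 0 * S 1 1 - S 0 1 * S 0 1 := by
    simpa [det_fin_two, h10] using hS.det_nonneg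
  rcases h00.eq_or_lt with h | h
  · have hz : S 0 1 = 0 := by
      rw [← h] at hdet
      nlinarith
    have hmem := vecMulVec_mem_rankOneCone_seg U hij le_rfl (Real.sqrt_nonneg (S 1 1))
    convert hmem using 1
    rw [transpose_mul_iota_mul, h10, hz, ← h]
    ext r s
    simp only [vecMulVec_apply, Matrix.smul_apply, Matrix.add_apply, Pi.add_apply,
      Pi.smul_apply, smul_eq_mul]
    linear_combination (-U j r * U j s) * Real.mul_self_sqrt h11
  · set q := Real.sqrt (S 0 0) with hq
    have hq0 : 0 < q := Real.sqrt_pos.mpr h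
    have hqq : q * q = S 0 0 := Real.mul_self_sqrt h00
    have hd : 0 ≤ S 1 1 - S 0 1 / q * (S 0 1 / q) := by
      have : S 1 1 - S 0 1 / q * (S 0 1 / q) =
          (S 0 0 * S 1 1 - S 0 1 * S 0 1) / S 0 0 := by
        rw [← hqq]
        field_simp
      rw [this]
      positivity
    have hmem := add_mem
      (vecMulVec_mem_rankOneCone_seg U hij hq0.le (div_nonneg h01 hq0.le))
      (vecMulVec_mem_rankOneCone_seg U hij le_rfl
        (Real.sqrt_nonneg (S 1 1 - S 0 1 / q * (S 0 1 / q))))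
    convert hmem using 1
    rw [transpose_mul_iota_mul, h10]
    have hqb : q * (S 0 1 / q) = S 0 1 := by field_simp
    ext r s
    simp only [vecMulVec_apply, Matrix.smul_apply, Matrix.add_apply, Pi.add_apply,
      Pi.smul_apply, smul_eq_mul]
    linear_combination (-U j r * U j s) * Real.mul_self_sqrt hd - U i r * U i s * hqq -
      (U i r * U j s + U j r * U i s) * hqb

open scoped Classical in
lemma sum_iota_apply {t : ℕ} (G : SimpleGraph (Fin t))
    (S : Fin t → Fin t → Matrix (Fin 2) (Fin 2) ℝ) {r s : Fin t} (hrs : r < s)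
    (hadj : G.Adj r s) :
    (∑ i : Fin t, ∑ j : Fin t, if i < j ∧ G.Adj i j then iota i j (S i j) else 0) r s =
      S r s 0 1 := by
  rw [Matrix.sum_apply, Finset.sum_eq_single r, Matrix.sum_apply, Finset.sum_eq_single s]
  · simp [iota, hrs, hadj, hrs.ne, hrs.ne']
  · intro j _ hj
    split_ifs with h
    · simp [iota, hrs.ne', h.1.ne, hj.symm]
    · rfl
  · simp
  · intro i _ hi
    rw [Matrix.sum_apply]
    refine Finset.sum_eq_zero fun j _ => ?_
    split_ifs with h
    · have hj : ¬ (r = j ∧ s = i) := by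
        rintro ⟨rfl, rfl⟩
        exact h.1.asymm hrs
      have hjj : ¬ (r = j ∧ s = j) := by
        rintro ⟨rfl, rfl⟩
        exact hrs.false
      simp [iota, hi.symm, hj, hjj]
    · rfl
  · simp

lemma zero_mem_SDDGplus {t : ℕ} (G : SimpleGraph (Fin t)) : 0 ∈ SDDGplus G :=
  ⟨⟨fun _ _ => 0, fun _ _ => PosSemidef.zero, by simp [iota_zero]⟩,
    isSymm_zero, fun _ _ => le_rfl⟩

lemma add_mem_SDDGplus {t : ℕ} {G : SimpleGraph (Fin t)} {X Y : Matrix (Fin t) (Fin t) ℝ}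
    (hX : X ∈ SDDGplus G) (hY : Y ∈ SDDGplus G) : X + Y ∈ SDDGplus G := by
  obtain ⟨⟨S, hS, hXS⟩, hXsymm, hXnn⟩ := hX
  obtain ⟨⟨T, hT, hYT⟩, hYsymm, hYnn⟩ := hY
  refine ⟨⟨fun i j => S i j + T i j, fun i j => (hS i j).add (hT i j), ?_⟩,
    hXsymm.add hYsymm, fun i j => add_nonneg (hXnn i j) (hYnn i j)⟩
  rw [hXS, hYT]
  simp only [← Finset.sum_add_distrib]
  refine Finset.sum_congr rfl fun i _ => Finset.sum_congr rfl fun j _ => ?_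
  split_ifs
  · rw [iota_add]
  · rw [add_zero]

lemma iota_mem_SDDGplus {t : ℕ} {G : SimpleGraph (Fin t)} {i j : Fin t} (hlt : i < j)
    (hij : G.Adj i j) {S : Matrix (Fin 2) (Fin 2) ℝ} (hS : S.PosSemidef)
    (hnn : ∀ k l, 0 ≤ S k l) : iota i j S ∈ SDDGplus G := by
  refine ⟨⟨fun r s => if r = i ∧ s = j then S else 0, fun r s => ?_, ?_⟩, ?_, fun r s => ?_⟩
  · dsimp only
    split_ifs
    · exact hS
    · exact PosSemidef.zero
  · rw [Finset.sum_eq_single i, Finset.sum_eq_single j]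
    · simp [hlt, hij]
    · intro s _ hs
      simp [hs, iota_zero]
    · simp
    · intro r _ hr
      simp [hr, iota_zero]
    · simp
  · have h10 : S 1 0 = S 0 1 := by simpa using hS.isHermitian.apply 0 1
    simp only [Matrix.IsSymm, iota_eq_single, transpose_add, transpose_single, h10]
    abel
  · simp only [iota, of_apply]
    have hite : ∀ (p : Prop) [Decidable p] (k l), 0 ≤ if p then S k l else 0 := by
      intro p _ k l
      split_ifs
      exacts [hnn k l, le_rfl]
    exact add_nonneg (add_nonneg (add_nonneg (hite _ _ _) (hite _ _ _)) (hite _ _ _)) (hite _ _ _)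

lemma SDDGplusU_eq_rankOneCone {t n : ℕ} (G : SimpleGraph (Fin t))
    (U : Matrix (Fin t) (Fin n) ℝ) :
    SDDGplusU G U = (rankOneCone (seg G U) : Set (Matrix (Fin n) (Fin n) ℝ)) := by
  classical
  ext X
  constructor
  · rintro ⟨Y, ⟨⟨S, hS, hY⟩, -, hnn⟩, rfl⟩
    have hpos : ∀ i j, i < j ∧ G.Adj i j → 0 ≤ S i j 0 1 := by
      intro i j h
      have hY_nn := hnn i j
      rw [hY] at hY_nn
      rwa [sum_iota_apply G S h.1 h.2] at hY_nn
    rw [hY, Matrix.mul_sum, Matrix.sum_mul]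
    refine sum_mem fun i _ => ?_
    rw [Matrix.mul_sum, Matrix.sum_mul]
    refine sum_mem fun j _ => ?_
    split_ifs with h
    · exact transpose_mul_iota_mul_mem_rankOneCone U h.2 (hS i j) (hpos i j h)
    · simp
  · intro hX
    induction hX using AddSubmonoid.closure_induction with
    | mem X hX =>
      obtain ⟨r, hr, v, ⟨i, j, hij, hv⟩, rfl⟩ := hX
      wlog hlt : i < j generalizing i j
      · exact this j i hij.symm (segment_symm ℝ (U i) (U j) ▸ hv)
          (lt_of_le_of_ne (not_lt.mp hlt) hij.ne')
      obtain ⟨a, b, ha, hb, -, rfl⟩ := hv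
      refine ⟨iota i j (r • vecMulVec ![a, b] ![a, b]), iota_mem_SDDGplus hlt hij ?_ ?_, ?_⟩
      · exact (posSemidef_vecMulVec_self_star ![a, b]).smul hr
      · intro k l
        fin_cases k <;> fin_cases l <;> simp <;> positivity
      · rw [transpose_mul_iota_mul]
        ext k l
        simp [vecMulVec_apply]
        ring
    | zero => exact ⟨0, zero_mem_SDDGplus G, by simp⟩
    | add X Y _ _ ihX ihY =>
      obtain ⟨A, hA, rfl⟩ := ihX
      obtain ⟨B, hB, rfl⟩ := ihY
      exact ⟨A + B, add_mem_SDDGplus hA hB, by rw [Matrix.mul_add, Matrix.add_mul]⟩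

/-- `SDD^G₊(U) = SDD^{G'}₊(U')` if and only if `seg(G,U) = seg(G',U')`. -/
theorem SDDGplusU_eq_iff_seg_eq {t t' n : ℕ}
    (G : SimpleGraph (Fin t)) (G' : SimpleGraph (Fin t'))
    (U : Matrix (Fin t) (Fin n) ℝ) (U' : Matrix (Fin t') (Fin n) ℝ)
    (hU : ∀ i j, 0 ≤ U i j) (hUrow : ∀ i, ∑ j, U i j = 1)
    (hU' : ∀ i j, 0 ≤ U' i j) (hU'row : ∀ i, ∑ j, U' i j = 1) :
    SDDGplusU G U = SDDGplusU G' U' ↔ seg G U = seg G' U' := by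
  rw [SDDGplusU_eq_rankOneCone, SDDGplusU_eq_rankOneCone, SetLike.coe_set_eq]
  refine ⟨fun h => ?_, fun h => by rw [h]⟩
  have hseg := sum_eq_one_of_mem_seg (G := G) hUrow
  have hseg' := sum_eq_one_of_mem_seg (G := G') hU'row
  exact (subset_of_rankOneCone_le hseg hseg' h.le).antisymm
    (subset_of_rankOneCone_le hseg' hseg h.ge)

end
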